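/- Let n ≥ 4 be an integer. For integers p, q with 1 ≤ p ≤ n, 0 ≤ q ≤ p and p + q ≥ 2, set V_{p,q}(x,t) = C(n,p) C(p,q) (2 ū(x,t) φ(x,t) + φ(x,t)²)^{n−p} (2 ū(x,t) + 2 φ(x,t))^{p−q} (binomial coefficients C(·,·)). Then there is a constant c > 0 such that for all t ≥ 1, sup_{x∈ℝ} |V_{p,q}(x,t)| ≤ c t^{−e(p,q)}, where e(2,0) = 2γ(n−2) + 2γ and e(p,q) = 2γ(n−p) for all other pairs with p + q ≥ 2. -/

import Mathlib

noncomputable def kap : ℝ := 1 / Real.sqrt Real.pi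

noncomputable def kap3 : ℝ := -kap / 12

noncomputable def gam (n : ℕ) : ℝ := 1 / (2 * (n : ℝ) + 1)

noncomputable def eps (n : ℕ) : ℝ := 1 / ((n : ℝ) - 1)

noncomputable def alph (n : ℕ) : ℝ := 1 / 2 - gam n

noncomputable def del (n : ℕ) : ℝ := ((n : ℝ) + 2) / ((n : ℝ) - 1)

noncomputable def lam (n : ℕ) : ℝ :=
  (del n * (del n + 1) / (2 * kap) ^ n) ^ (1 / ((n : ℝ) - 1))

noncomputable def lam0 (n : ℕ) : ℝ :=
  (lam n / (2 * kap)) *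
    (-2 * (n : ℝ) * kap3 * del n * (del n + 1) - kap * (del n - 2 * eps n)) /
    (((n : ℝ) - 1) * del n * (del n + 1) + 2 * (2 * del n - 1))

def IsReactiveProfile (n : ℕ) (η : ℝ → ℝ) : Prop :=
  ContDiffOn ℝ 2 η (Set.Ici 0) ∧
  (∀ z ∈ Set.Ici (0:ℝ), 0 < η z) ∧
  (∀ z ∈ Set.Ici (0:ℝ),
    derivWithin (derivWithin η (Set.Ici 0)) (Set.Ici 0) z
      = (2 * kap * z * η z + (η z) ^ 2) ^ n) ∧
  derivWithin η (Set.Ici 0) 0 = -kap ∧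
  Filter.Tendsto η Filter.atTop (nhds 0)

/-- The corrector h: C² on [0,∞), satisfies
h'' + γη + αzη' = n(2κzη+η²)^{n−1}((2κz+2η)h + 2κ₃z³η), h'(0) = 0,
h(z) − λ₀ z^{2−δ} → 0 as z → ∞. -/
def IsCorrector (n : ℕ) (η h : ℝ → ℝ) : Prop :=
  ContDiffOn ℝ 2 h (Set.Ici 0) ∧
  (∀ z ∈ Set.Ici (0:ℝ),
    derivWithin (derivWithin h (Set.Ici 0)) (Set.Ici 0) z + gam n * η z
        + alph n * z * derivWithin η (Set.Ici 0) z
      = (n : ℝ) * (2 * kap * z * η z + (η z) ^ 2) ^ (n - 1)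
          * ((2 * kap * z + 2 * η z) * h z + 2 * kap3 * z ^ 3 * η z)) ∧
  derivWithin h (Set.Ici 0) 0 = 0 ∧
  Filter.Tendsto (fun z : ℝ => h z - lam0 n * z ^ (2 - del n)) Filter.atTop (nhds 0)

noncomputable def mu1 (y : ℝ) : ℝ :=
  (2 / Real.sqrt Real.pi) * ∫ σ in (0:ℝ)..(y / 2), Real.exp (-σ ^ 2)

def IsDiffusiveProfile (n : ℕ) (μ : ℝ → ℝ) : Prop :=
  ContDiffOn ℝ 2 μ (Set.Ioi 0) ∧
  (∀ y ∈ Set.Ioi (0:ℝ), 0 < μ y) ∧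
  (∀ y ∈ Set.Ioi (0:ℝ),
    deriv (deriv μ) y + y / 2 * deriv μ y + eps n * μ y = (2 * mu1 y * μ y) ^ n) ∧
  Filter.Tendsto (fun y : ℝ => y ^ del n * μ y) (nhdsWithin 0 (Set.Ioi 0)) (nhds (lam n)) ∧
  Filter.Tendsto (fun y : ℝ => y ^ (2 * eps n) * μ y) Filter.atTop (nhds 0)

/-- u(x,t) = −erf(x/(2√t)). -/
noncomputable def uu (x t : ℝ) : ℝ := -mu1 (x / Real.sqrt t)

/-- ū(x,t) = μ₁(|x|/√t). -/
noncomputable def ubar (x t : ℝ) : ℝ := mu1 (|x| / Real.sqrt t)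

/-- φ₁(z) = η(z) − λ z^{−δ}. -/
noncomputable def phi1 (n : ℕ) (η : ℝ → ℝ) (z : ℝ) : ℝ := η z - lam n * z ^ (-(del n))

/-- φ₂(z) = −λ₀ z^{2−δ} + h(z). -/
noncomputable def phi2 (n : ℕ) (h : ℝ → ℝ) (z : ℝ) : ℝ := -lam0 n * z ^ (2 - del n) + h z

/-- μ₃(y) = μ₂(y) − λ y^{−δ}. -/
noncomputable def mu3 (n : ℕ) (μ : ℝ → ℝ) (y : ℝ) : ℝ := μ y - lam n * y ^ (-(del n))

/-- The asymptotic profile v_∞. -/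
noncomputable def vInf (n : ℕ) (η μ h : ℝ → ℝ) (x t : ℝ) : ℝ :=
  mu1 (|x| / Real.sqrt t) + t ^ (-(eps n)) * μ (|x| / Real.sqrt t)
    + t ^ (-(gam n)) * phi1 n η (|x| / t ^ alph n)
    + t ^ (-(3 * gam n)) * phi2 n h (|x| / t ^ alph n)

/-- φ(x,t) = t^{−γ} η(|z|) + t^{−ε} μ₃(|y|) + t^{−3γ} φ₂(|z|). -/
noncomputable def phiFun (n : ℕ) (η μ h : ℝ → ℝ) (x t : ℝ) : ℝ :=
  t ^ (-(gam n)) * η (|x| / t ^ alph n) + t ^ (-(eps n)) * mu3 n μ (|x| / Real.sqrt t)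
    + t ^ (-(3 * gam n)) * phi2 n h (|x| / t ^ alph n)

/-- V_{p,q}(x,t) = C(n,p) C(p,q) (2ūφ + φ²)^{n−p} (2ū + 2φ)^{p−q}. -/
noncomputable def Vpq (n p q : ℕ) (η μ h : ℝ → ℝ) (x t : ℝ) : ℝ :=
  (n.choose p : ℝ) * (p.choose q : ℝ)
    * (2 * ubar x t * phiFun n η μ h x t + phiFun n η μ h x t ^ 2) ^ (n - p)
    * (2 * ubar x t + 2 * phiFun n η μ h x t) ^ (p - q)

/-- Decay exponents e(p,q). -/
noncomputable def epq (n p q : ℕ) : ℝ :=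
  if p = 2 ∧ q = 0 then 2 * gam n * ((n : ℝ) - 2) + 2 * gam n
  else 2 * gam n * ((n : ℝ) - (p : ℝ))

/-- If `f'' > 0` at `x`, then `x` is not a local maximum. -/
lemma not_isLocalMax_of_deriv2_pos {f : ℝ → ℝ} {x : ℝ} (hc : ContinuousAt f x)
    (h2 : 0 < deriv (deriv f) x) : ¬ IsLocalMax f x := by
  intro hmax
  have h1 : deriv f x = 0 := hmax.deriv_eq_zero
  have hmin : IsLocalMin f x := isLocalMin_of_deriv_deriv_pos h2 h1 hc
  have heq : f =ᶠ[nhds x] fun _ => f x := by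
    filter_upwards [hmax, hmin] with y hy1 hy2
    exact le_antisymm hy1 hy2
  have h3 : deriv f =ᶠ[nhds x] deriv (fun _ => f x) := heq.deriv
  have h4 := h3.deriv_eq
  simp at h4
  linarith

lemma max_principle {f : ℝ → ℝ} {a b : ℝ} (hf : ContinuousOn f (Set.Icc a b))
    (ha : f a ≤ 0) (hb : f b ≤ 0)
    (hin : ∀ x ∈ Set.Ioo a b, 0 < f x → ¬ IsLocalMax f x) :
    ∀ x ∈ Set.Icc a b, f x ≤ 0 := by
  intro x hx
  obtain ⟨m, hm, hmax⟩ := isCompact_Icc.exists_isMaxOn ⟨x, hx⟩ hf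
  by_contra hpos
  push Not at hpos
  have hfm : 0 < f m := lt_of_lt_of_le hpos (hmax hx)
  have hma : a < m := lt_of_le_of_ne hm.1 (by rintro rfl; linarith)
  have hmb : m < b := lt_of_le_of_ne hm.2 (by rintro rfl; linarith)
  exact hin m ⟨hma, hmb⟩ hfm (hmax.isLocalMax (Icc_mem_nhds hma hmb))

lemma kap_pos : 0 < kap := by unfold kap; positivity

lemma mu1_bounds {y : ℝ} (hy : 0 ≤ y) :
    0 ≤ mu1 y ∧ mu1 y ≤ 1 ∧ mu1 y ≤ kap * y ∧ kap * y * (1 - y ^ 2) ≤ mu1 y := by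
  have hk : (2 / Real.sqrt Real.pi) = 2 * kap := by unfold kap; ring
  have hkp := kap_pos
  have hy2 : (0:ℝ) ≤ y / 2 := by linarith
  have hcont : Continuous fun σ : ℝ => Real.exp (-σ ^ 2) := by fun_prop
  unfold mu1
  refine ⟨?_, ?_, ?_, ?_⟩
  · have : 0 ≤ ∫ σ in (0:ℝ)..(y / 2), Real.exp (-σ ^ 2) :=
      intervalIntegral.integral_nonneg hy2 (fun u _ => (Real.exp_pos _).le)
    positivity
  · have h1 : ∫ σ in (0:ℝ)..(y / 2), Real.exp (-σ ^ 2) ≤ Real.sqrt Real.pi / 2 := by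
      rw [intervalIntegral.integral_of_le hy2]
      have hg := integral_gaussian_Ioi 1
      simp only [neg_mul, one_mul, div_one] at hg
      rw [← hg]
      apply MeasureTheory.setIntegral_mono_set
      · have := (integrable_exp_neg_mul_sq (b := 1) one_pos)
        simp only [neg_mul, one_mul] at this
        exact this.integrableOn
      · exact Filter.Eventually.of_forall (fun _ => (Real.exp_pos _).le)
      · exact (Set.Ioc_subset_Ioi_self).eventuallyLE
    calc _ ≤ (2 / Real.sqrt Real.pi) * (Real.sqrt Real.pi / 2) := by gcongr
      _ = 1 := by
        have : Real.sqrt Real.pi ≠ 0 := by positivity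
        field_simp
  · rw [hk]
    have h1 : ∫ σ in (0:ℝ)..(y / 2), Real.exp (-σ ^ 2) ≤ ∫ σ in (0:ℝ)..(y / 2), (1:ℝ) := by
      apply intervalIntegral.integral_mono_on hy2 (hcont.intervalIntegrable _ _) (by simp)
      intro x _
      exact Real.exp_le_one_iff.mpr (by nlinarith [sq_nonneg x])
    simp at h1
    nlinarith
  · rw [hk]
    have h1 : ∫ σ in (0:ℝ)..(y / 2), (1 - y^2:ℝ) ≤ ∫ σ in (0:ℝ)..(y / 2), Real.exp (-σ ^ 2) := by
      apply intervalIntegral.integral_mono_on hy2 (by simp) (hcont.intervalIntegrable _ _)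
      intro x hx
      have := Real.add_one_le_exp (-x^2)
      have h2 := hx.1
      have h3 := hx.2
      nlinarith
    simp at h1
    nlinarith

lemma kap_lt_one : kap ≤ 1 := by
  unfold kap
  rw [div_le_one (by positivity)]
  rw [Real.one_le_sqrt]
  linarith [Real.pi_gt_three]

lemma del_facts {n : ℕ} (hn : 4 ≤ n) :
    1 < del n ∧ del n ≤ 2 ∧ del n * ((n:ℝ) - 1) = n + 2 ∧ gam n * (1 + del n) = eps n
    ∧ 0 < gam n ∧ 0 < eps n ∧ eps n ≤ 3 * gam n ∧ 2 * gam n ≤ eps n ∧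
    2 ≤ (del n - 1) * ((n:ℝ) - 2) ∧ 2 * gam n * ((n:ℝ) - 1) ≤ eps n * ((n:ℝ) - 2) := by
  have h4 : (4:ℝ) ≤ n := by exact_mod_cast hn
  have h1 : (0:ℝ) < n - 1 := by linarith
  have h2 : (0:ℝ) < 2 * n + 1 := by linarith
  unfold del gam eps
  refine ⟨?_, ?_, ?_, ?_, ?_, ?_, ?_, ?_, ?_, ?_⟩
  · rw [lt_div_iff₀ h1]; linarith
  · rw [div_le_iff₀ h1]; linarith
  · field_simp
  · field_simp; ring
  · positivity
  · positivity
  · rw [mul_one_div, div_le_div_iff₀ h1 h2]; linarith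
  · rw [mul_one_div, div_le_div_iff₀ h2 h1]; linarith
  · have : ((n:ℝ) + 2) / (n - 1) - 1 = 3 / (n - 1) := by field_simp; ring
    rw [this, div_mul_eq_mul_div, le_div_iff₀ h1]; linarith
  · rw [mul_one_div, div_mul_eq_mul_div, div_mul_eq_mul_div, div_le_div_iff₀ h2 h1]; nlinarith

lemma lam_facts {n : ℕ} (hn : 4 ≤ n) :
    0 < lam n ∧ lam n ^ (n - 1) * (2 * kap) ^ n = del n * (del n + 1) := by
  obtain ⟨hd, -⟩ := del_facts hn
  have hk := kap_pos
  have hbase : 0 < del n * (del n + 1) / (2 * kap) ^ n := by positivity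
  refine ⟨Real.rpow_pos_of_pos hbase _, ?_⟩
  unfold lam
  have hcast : ((n:ℝ) - 1) = ((n - 1 : ℕ) : ℝ) := by
    rw [Nat.cast_sub (by omega)]; simp
  rw [hcast, one_div, Real.rpow_inv_natCast_pow hbase.le (by omega)]
  field_simp

/-- power identity: `(z * z^{-δ})^n = z^{-δ-2}`. -/
lemma pow_identity {n : ℕ} (hn : 4 ≤ n) {z : ℝ} (hz : 0 < z) :
    (z * z ^ (-(del n))) ^ n = z ^ (-(del n) - 2) := by
  obtain ⟨-, -, h3, -⟩ := del_facts hn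
  have : z * z ^ (-(del n)) = z ^ (1 - del n) := by
    rw [sub_eq_add_neg, Real.rpow_add hz, Real.rpow_one]
  rw [this, ← Real.rpow_natCast, ← Real.rpow_mul hz.le]
  congr 1
  linarith

lemma hasDerivAt_rpow' (d : ℝ) {z : ℝ} (hz : 0 < z) :
    HasDerivAt (fun z : ℝ => z ^ (-d)) (-d * z ^ (-d - 1)) z := by
  exact Real.hasDerivAt_rpow_const (Or.inl hz.ne')

lemma hasDerivAt2_rpow' (d : ℝ) {z : ℝ} (hz : 0 < z) :
    HasDerivAt (fun z : ℝ => -d * z ^ (-d - 1)) (d * (d + 1) * z ^ (-d - 2)) z := by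
  have := (Real.hasDerivAt_rpow_const (x := z) (p := -d - 1) (Or.inl hz.ne')).const_mul (-d)
  rw [show -d - 1 - 1 = -d - 2 by ring] at this
  exact this.congr_deriv (by ring)

/-- second derivative of `s * f - K - c z^{-d}` -/
lemma deriv2_barrier {f : ℝ → ℝ} (hf : ∀ z > 0, DifferentiableAt ℝ f z)
    (s K c d : ℝ) {z : ℝ} (hf2 : DifferentiableAt ℝ (deriv f) z)
    (hz : 0 < z) :
    deriv (fun z => s * f z - K - c * z ^ (-d)) z = s * deriv f z + c * d * z ^ (-d - 1) ∧
    deriv (deriv (fun z => s * f z - K - c * z ^ (-d))) z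
      = s * deriv (deriv f) z - c * (d * (d + 1) * z ^ (-d - 2)) := by
  have key : ∀ z > 0, HasDerivAt (fun z => s * f z - K - c * z ^ (-d))
      (s * deriv f z - c * (-d * z ^ (-d - 1))) z := by
    intro z hz
    exact (((hf z hz).hasDerivAt.const_mul s).sub_const K).sub ((hasDerivAt_rpow' d hz).const_mul c)
  refine ⟨by rw [(key z hz).deriv]; ring, ?_⟩
  have : deriv (fun z => s * f z - K - c * z ^ (-d)) =ᶠ[nhds z]
      fun z => s * deriv f z - c * (-d * z ^ (-d - 1)) := by
    filter_upwards [lt_mem_nhds hz] with x hx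
    exact (key x hx).deriv
  rw [this.deriv_eq]
  exact ((hf2.hasDerivAt.const_mul s).sub ((hasDerivAt2_rpow' d hz).const_mul c)).deriv

lemma contDiffOn_facts {f : ℝ → ℝ} (hf : ContDiffOn ℝ 2 f (Set.Ioi 0)) :
    (∀ z > 0, DifferentiableAt ℝ f z) ∧ (∀ z > 0, DifferentiableAt ℝ (deriv f) z) := by
  constructor
  · intro z hz
    exact (hf.differentiableOn (by norm_num)).differentiableAt (Ioi_mem_nhds hz)
  · intro z hz
    have h := hf.deriv_of_isOpen (m := 1) isOpen_Ioi (by norm_num)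
    exact (h.differentiableOn (by norm_num)).differentiableAt (Ioi_mem_nhds hz)

lemma eta_ode {n : ℕ} {η : ℝ → ℝ} (hη : IsReactiveProfile n η) {z : ℝ} (hz : 0 < z) :
    deriv (deriv η) z = (2 * kap * z * η z + (η z) ^ 2) ^ n := by
  obtain ⟨-, -, h, -⟩ := hη
  rw [← h z hz.le]
  have h1 : ∀ x > 0, ∀ f : ℝ → ℝ, derivWithin f (Set.Ici 0) x = deriv f x :=
    fun x hx f => derivWithin_of_mem_nhds (Ici_mem_nhds hx)
  rw [h1 z hz]
  apply Filter.EventuallyEq.deriv_eq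
  filter_upwards [lt_mem_nhds hz] with x hx
  exact (h1 x hx η).symm

lemma bounded_of_tendsto {f : ℝ → ℝ} {a l : ℝ} (hf : ContinuousOn f (Set.Ici a))
    (ht : Filter.Tendsto f Filter.atTop (nhds l)) :
    ∃ M : ℝ, 0 < M ∧ ∀ z ≥ a, |f z| ≤ M := by
  have h1 : ∀ᶠ z in Filter.atTop, |f z| < |l| + 1 :=
    (ht.abs).eventually_lt_const (by linarith)
  obtain ⟨B, hB⟩ := Filter.eventually_atTop.mp h1
  obtain ⟨M, hM⟩ := isCompact_Icc.exists_bound_of_continuousOn (hf.mono (fun x hx => hx.1 : Set.Icc a B ⊆ Set.Ici a))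
  refine ⟨max M (|l| + 1), lt_max_of_lt_right (by positivity), fun z hz => ?_⟩
  rcases le_total z B with hzB | hzB
  · exact le_max_of_le_left (hM z ⟨hz, hzB⟩)
  · exact le_max_of_le_right (hB z hzB).le

lemma eta_bounds {n : ℕ} (hn : 4 ≤ n) {η : ℝ → ℝ} (hη : IsReactiveProfile n η) :
    ∃ M : ℝ, 0 < M ∧ (∀ z ≥ 0, |η z| ≤ M) ∧ (∀ z > 0, |η z| ≤ M * z ^ (-(del n))) := by
  have hode := @eta_ode n η hη
  obtain ⟨hC, hpos, -, -, hlim⟩ := hη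
  obtain ⟨hd1, hd2, -⟩ := del_facts hn
  obtain ⟨hl, hlam⟩ := lam_facts hn
  have hk := kap_pos
  obtain ⟨M0, hM0, hb⟩ := bounded_of_tendsto hC.continuousOn hlim
  obtain ⟨hdf, hdf2⟩ := contDiffOn_facts (hC.mono Set.Ioi_subset_Ici_self)
  set C := max (lam n) M0 with hCdef
  have hCl : lam n ≤ C := le_max_left _ _
  have hCM : M0 ≤ C := le_max_right _ _
  have hCp : 0 < C := lt_of_lt_of_le hl hCl
  have key : ∀ z ≥ 1, η z ≤ C * z ^ (-(del n)) := by
    intro z hz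
    apply le_of_forall_pos_le_add
    intro σ hσ
    obtain ⟨b, hbz, hbσ⟩ : ∃ b ≥ z, η b < σ :=
      ((Filter.eventually_ge_atTop z).and (hlim.eventually_lt_const hσ)).exists
    have := max_principle (f := fun z => 1 * η z - σ - C * z ^ (-(del n))) (a := 1) (b := b) ?_ ?_ ?_ ?_
      z ⟨hz, hbz⟩
    · linarith
    · intro x hx
      have hx0 : 0 < x := by linarith [hx.1]
      have h1 := (hdf x hx0).continuousAt
      have h2 := (hasDerivAt_rpow' (del n) hx0).continuousAt
      have h3 : ContinuousAt (fun z => 1 * η z - σ - C * z ^ (-(del n))) x :=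
        ((h1.const_mul 1).sub_const σ).sub (h2.const_mul C)
      exact h3.continuousWithinAt
    · have := (abs_le.mp (hb 1 (by norm_num))).2
      simp; linarith
    · have : 0 < b ^ (-(del n)) := Real.rpow_pos_of_pos (by linarith) _
      have : 0 < C * b ^ (-(del n)) := by positivity
      linarith
    · intro x hx hfx
      have hx0 : 0 < x := by linarith [hx.1]
      have hr : 0 < x ^ (-(del n)) := Real.rpow_pos_of_pos hx0 _
      apply not_isLocalMax_of_deriv2_pos
      · have h1 := (hdf x hx0).continuousAt
        have h2 := (hasDerivAt_rpow' (del n) hx0).continuousAt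
        exact (((h1.const_mul 1).sub_const σ).sub (h2.const_mul C))
      · rw [(deriv2_barrier hdf 1 σ C (del n) (hdf2 x hx0) hx0).2, hode hx0]
        have h1 : C * x ^ (-(del n)) < η x := by linarith
        have h2 : 2 * kap * x * (C * x ^ (-(del n))) < 2 * kap * x * η x + (η x) ^ 2 := by
          have : 0 < η x := hpos x hx0.le
          have : 2 * kap * x * (C * x ^ (-(del n))) < 2 * kap * x * η x := by gcongr
          nlinarith
        have h3 : (2 * kap * x * (C * x ^ (-(del n)))) ^ n < (2 * kap * x * η x + (η x) ^ 2) ^ n :=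
          pow_lt_pow_left₀ h2 (by positivity) (by omega)
        have h4 : (2 * kap * x * (C * x ^ (-(del n)))) ^ n
            = C * (C ^ (n - 1) * (2 * kap) ^ n) * x ^ (-(del n) - 2) := by
          rw [← pow_identity hn hx0]
          obtain ⟨m, rfl⟩ : ∃ m, n = m + 1 := ⟨n - 1, by omega⟩
          simp only [Nat.add_sub_cancel, mul_pow, pow_succ]; ring
        have h5 : del n * (del n + 1) ≤ C ^ (n - 1) * (2 * kap) ^ n := by
          rw [← hlam]; gcongr
        have h6 : 0 < x ^ (-(del n) - 2) := Real.rpow_pos_of_pos hx0 _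
        have h7 : C * (del n * (del n + 1)) * x ^ (-(del n) - 2)
          ≤ C * (C ^ (n - 1) * (2 * kap) ^ n) * x ^ (-(del n) - 2) := by gcongr
        linarith
  refine ⟨C, hCp, fun z hz => (hb z hz).trans hCM, fun z hz => ?_⟩
  rcases le_total 1 z with h | h
  · rw [abs_of_pos (hpos z hz.le)]; exact key z h
  · have : 1 ≤ z ^ (-(del n)) := Real.one_le_rpow_of_pos_of_le_one_of_nonpos hz h (by linarith)
    calc |η z| ≤ M0 := hb z hz.le
      _ ≤ C := hCM
      _ ≤ C * z ^ (-(del n)) := le_mul_of_one_le_right hCp.le this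

lemma phi2_bound {n : ℕ} (hn : 4 ≤ n) {η h : ℝ → ℝ} (hh : IsCorrector n η h) :
    ∃ M : ℝ, 0 < M ∧ (∀ z ≥ 0, |phi2 n h z| ≤ M) := by
  obtain ⟨hC, -, -, hlim⟩ := hh
  obtain ⟨hd1, hd2, -⟩ := del_facts hn
  apply bounded_of_tendsto (l := 0)
  · unfold phi2
    have : Continuous fun z : ℝ => z ^ (2 - del n) :=
      Real.continuous_rpow_const (by linarith)
    exact (this.const_mul _).continuousOn.add hC.continuousOn
  · refine hlim.congr fun z => ?_
    unfold phi2; ring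

lemma pow_tangent {a b : ℝ} (ha : 0 ≤ a) (hb : 0 ≤ b) (k : ℕ) :
    a ^ (k + 1) + (k + 1) * a ^ k * (b - a) ≤ b ^ (k + 1) := by
  induction k with
  | zero => norm_num
  | succ k ih =>
    have h1 := mul_le_mul_of_nonneg_left ih hb
    have h2 : 0 ≤ ((k:ℝ) + 1) * a ^ k * (b - a) ^ 2 := by positivity
    push_cast
    have e1 : b ^ (k + 1 + 1) = b * b ^ (k + 1) := by ring
    rw [e1]
    refine le_trans ?_ h1
    have e2 : b * (a ^ (k + 1) + (k + 1) * a ^ k * (b - a))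
        - (a ^ (k + 1 + 1) + ((k:ℝ) + 1 + 1) * a ^ (k + 1) * (b - a))
        = ((k:ℝ) + 1) * a ^ k * (b - a) ^ 2 := by ring
    linarith

/-- Pointwise estimate of the nonlinearity near the origin; `P = (2κx)^n`, `Q = (2μ₁)^n`. -/
lemma nonlin_est {k : ℕ} (hk : 3 ≤ k) {P Q b m ν : ℝ} (hb : 0 < b) (hm : 0 < m)
    (hP : 0 < P) (hQP : Q ≤ P) (hν : 0 ≤ ν) (hν' : ν ≤ 1 / 4) (hQ : (1 - ν) * P ≤ Q)
    (hmb : 3 / 4 * b ^ k ≤ m ^ k) :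
    (0 < m - b → 2 * (P * b ^ k) * (m - b) - ν * (P * b ^ k) * b
        ≤ Q * m ^ (k + 1) - P * b ^ (k + 1)) ∧
    (0 < b - m → 2 * (P * b ^ k) * (b - m) - ν * (P * b ^ k) * b
        ≤ P * b ^ (k + 1) - Q * m ^ (k + 1)) := by
  have hk' : (3:ℝ) ≤ k := by exact_mod_cast hk
  have hQ0 : 3 / 4 * P ≤ Q := by nlinarith
  have hQp : 0 < Q := by linarith [mul_pos (by norm_num : (0:ℝ) < 3/4) hP]
  have hbk : 0 < b ^ k := by positivity
  have hmk : 0 < m ^ k := by positivity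
  constructor
  · intro h
    have h1 := pow_tangent hb.le hm.le k
    have h2 : Q * (b ^ (k + 1) + (k + 1) * b ^ k * (m - b)) ≤ Q * m ^ (k + 1) := by gcongr
    have h3 : (1 - ν) * P * b ^ (k + 1) ≤ Q * b ^ (k + 1) := by gcongr
    have h4 : 2 * P ≤ Q * (k + 1) := by nlinarith
    have h5 : (2 * P) * (b ^ k * (m - b)) ≤ (Q * (k + 1)) * (b ^ k * (m - b)) := by gcongr
    have e1 : b ^ (k + 1) = b ^ k * b := pow_succ _ _
    rw [e1] at h2 h3 ⊢
    linarith
  · intro h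
    have h1 := pow_tangent hm.le hb.le k
    have h2 : Q * (m ^ (k + 1) + (k + 1) * m ^ k * (b - m)) ≤ Q * b ^ (k + 1) := by gcongr
    have h3 : Q * b ^ (k + 1) ≤ P * b ^ (k + 1) := by gcongr
    have h6 : (3 / 4 * P) * (3 / 4 * b ^ k) ≤ Q * m ^ k := by gcongr
    have hPb : 0 < P * b ^ k := by positivity
    have h4 : 2 * (P * b ^ k) ≤ (Q * m ^ k) * (k + 1) := by nlinarith
    have h5 : (2 * (P * b ^ k)) * (b - m) ≤ ((Q * m ^ k) * (k + 1)) * (b - m) := by gcongr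
    have h7 : 0 ≤ ν * (P * b ^ k) * b := by positivity
    linarith

set_option maxHeartbeats 4000000 in
lemma mu3_bound {n : ℕ} (hn : 4 ≤ n) {μ : ℝ → ℝ} (hμ : IsDiffusiveProfile n μ) :
    ∃ M : ℝ, 0 < M ∧ (∀ y ≥ 0, |mu3 n μ y| ≤ M) := by
  obtain ⟨hC, hpos, hode, hlim0, hlim⟩ := hμ
  obtain ⟨hd1, hd2, -, -, -, heps, -⟩ := del_facts hn
  obtain ⟨hl, hlam⟩ := lam_facts hn
  have hk := kap_pos
  obtain ⟨hdf, hdf2⟩ := contDiffOn_facts hC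
  have hn4 : (4:ℝ) ≤ n := by exact_mod_cast hn
  set D := del n * (del n + 1) with hD
  have hD1 : 1 ≤ D := by nlinarith
  -- choice of the small interval
  obtain ⟨y0, hy0, hy01, hny, hy0b⟩ : ∃ y0 : ℝ, 0 < y0 ∧ y0 ≤ 1 ∧ (n:ℝ) * y0 ^ 2 ≤ 1 / 4 ∧
      ∀ x, 0 < x → x ≤ y0 → 3 / 4 * lam n ^ (n - 1) ≤ (x ^ del n * μ x) ^ (n - 1) ∧
        x ^ del n * μ x ≤ 2 * lam n := by
    have e1 := (hlim0.pow (n - 1)).eventually_const_lt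
      (show 3 / 4 * lam n ^ (n - 1) < lam n ^ (n - 1) by
        have : 0 < lam n ^ (n - 1) := by positivity
        linarith)
    have e2 := hlim0.eventually_lt_const (show lam n < 2 * lam n by linarith)
    obtain ⟨u, hu, hsub⟩ := mem_nhdsGT_iff_exists_Ioo_subset.mp (e1.and e2)
    have hu0 : 0 < u := hu
    refine ⟨min (u / 2) (1 / n), by positivity, ?_, ?_, ?_⟩
    · refine (min_le_right _ _).trans ?_
      rw [div_le_one (by positivity)]; linarith
    · have h1 : min (u / 2) (1 / (n:ℝ)) ≤ 1 / n := min_le_right _ _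
      have h0 : 0 < min (u / 2) (1 / (n:ℝ)) := by positivity
      calc (n:ℝ) * (min (u / 2) (1 / (n:ℝ))) ^ 2 ≤ (n:ℝ) * (1 / (n:ℝ)) ^ 2 := by gcongr
        _ = 1 / (n:ℝ) := by field_simp
        _ ≤ 1 / 4 := by gcongr
    · intro x hx hx'
      have : x ∈ Set.Ioo 0 u := ⟨hx, by linarith [min_le_left (u / 2) (1 / (n:ℝ))]⟩
      have := hsub this
      exact ⟨this.1.le, this.2.le⟩
  set G := lam n * (n * D + del n / 2 + 2 * eps n) with hG
  have hG0 : 0 < G := by positivity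
  set K := max G (|mu3 n μ y0|) with hK
  have hKG : G ≤ K := le_max_left _ _
  have hKw : |mu3 n μ y0| ≤ K := le_max_right _ _
  have hK0 : 0 < K := lt_of_lt_of_le hG0 hKG
  have main : ∀ s : ℝ, (s = 1 ∨ s = -1) → ∀ σ > 0, ∀ y, 0 < y → y ≤ y0 →
      s * μ y - K - (s * lam n + σ) * y ^ (-(del n)) ≤ 0 := by
    intro s hs σ hσ y hy hyy0
    have hs1 : |s| = 1 := by rcases hs with rfl | rfl <;> simp
    -- left end point
    obtain ⟨a, ha0, hay, haσ⟩ : ∃ a, 0 < a ∧ a < y ∧ |a ^ del n * μ a - lam n| < σ := by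
      have e1 : ∀ᶠ a in nhdsWithin (0:ℝ) (Set.Ioi 0), |a ^ del n * μ a - lam n| < σ := by
        have := (hlim0.sub_const (lam n)).abs
        simp only [sub_self, abs_zero] at this
        exact this.eventually_lt_const hσ
      have e2 : ∀ᶠ a in nhdsWithin (0:ℝ) (Set.Ioi 0), a ∈ Set.Ioo 0 y := Ioo_mem_nhdsGT hy
      obtain ⟨a, h1, h2⟩ := (e1.and e2).exists
      exact ⟨a, h2.1, h2.2, h1⟩
    have hcont : ∀ x > 0, ContinuousAt
        (fun x => s * μ x - K - (s * lam n + σ) * x ^ (-(del n))) x := by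
      intro x hx0
      have h1 := (hdf x hx0).continuousAt
      have h2 := (hasDerivAt_rpow' (del n) hx0).continuousAt
      exact (((h1.const_mul s).sub_const K).sub (h2.const_mul _))
    refine max_principle (f := fun x => s * μ x - K - (s * lam n + σ) * x ^ (-(del n)))
      (a := a) (b := y0) ?_ ?_ ?_ ?_ y ⟨hay.le, hyy0⟩
    · intro x hx
      exact (hcont x (by linarith [hx.1])).continuousWithinAt
    · have hr : 0 < a ^ (-(del n)) := Real.rpow_pos_of_pos ha0 _
      have hrr : a ^ del n * a ^ (-(del n)) = 1 := by
        rw [← Real.rpow_add ha0]; simp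
      have h1 : s * (a ^ del n * μ a - lam n) ≤ σ := by
        calc _ ≤ |s * (a ^ del n * μ a - lam n)| := le_abs_self _
          _ ≤ σ := by rw [abs_mul, hs1, one_mul]; exact haσ.le
      have h2 := mul_le_mul_of_nonneg_right h1 hr.le
      have h3 : s * (a ^ del n * μ a - lam n) * a ^ (-(del n))
          = s * μ a * (a ^ del n * a ^ (-(del n))) - s * lam n * a ^ (-(del n)) := by ring
      rw [h3, hrr] at h2
      linarith
    · have hr : 0 < y0 ^ (-(del n)) := Real.rpow_pos_of_pos hy0 _
      have h1 : s * mu3 n μ y0 ≤ K := by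
        calc _ ≤ |s * mu3 n μ y0| := le_abs_self _
          _ ≤ K := by rw [abs_mul, hs1, one_mul]; exact hKw
      unfold mu3 at h1
      have := mul_pos hσ hr
      linarith
    · intro x hx hfx hmax
      have hx0 : 0 < x := by linarith [hx.1]
      have hxy : x ≤ y0 := hx.2.le
      obtain ⟨hd', hd''⟩ := deriv2_barrier hdf s K (s * lam n + σ) (del n) (hdf2 x hx0) hx0
      have hz' := hmax.deriv_eq_zero
      rw [hd'] at hz'
      refine not_isLocalMax_of_deriv2_pos (hcont x hx0) ?_ hmax
      rw [hd'']
      clear hd' hd''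
      have ho := hode x hx0
      obtain ⟨hb1, hb2⟩ := hy0b x hx0 hxy
      have hm := hpos x hx0
      obtain ⟨hu0, -, hu1, hu2⟩ := mu1_bounds hx0.le
      have hr : 0 < x ^ (-(del n)) := Real.rpow_pos_of_pos hx0 _
      have hrr : x ^ del n * x ^ (-(del n)) = 1 := by
        rw [← Real.rpow_add hx0]; simp
      have hr1 : x ^ (-(del n) - 1) * x = x ^ (-(del n)) := by
        rw [Real.rpow_sub_one hx0.ne']; field_simp
      have hr2 : x ^ (-(del n) - 2) * x ^ 2 = x ^ (-(del n)) := by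
        rw [Real.rpow_sub hx0]; norm_cast; field_simp
      have hr3 : x ^ (-(del n)) * x ^ 2 ≤ 1 := by
        rw [← Real.rpow_natCast, ← Real.rpow_add hx0]
        exact Real.rpow_le_one hx0.le (by linarith) (by push_cast; linarith)
      have hpi := pow_identity hn hx0
      set r := x ^ (-(del n)) with hrdef
      set R := x ^ (-(del n) - 2) with hRdef
      set r1 := x ^ (-(del n) - 1) with hr1def
      set m := μ x with hmdef
      set u := mu1 x with hudef
      have hR0 : 0 < R := Real.rpow_pos_of_pos hx0 _
      obtain ⟨k, hkn⟩ : ∃ k, n = k + 1 := ⟨n - 1, by omega⟩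
      have hk1 : n - 1 = k := by omega
      rw [hk1] at hb1 hlam
      -- the nonlinearity
      have hx2 : x ^ 2 ≤ y0 ^ 2 := by gcongr
      have hν : (n:ℝ) * x ^ 2 ≤ 1 / 4 := by
        refine le_trans ?_ hny
        gcongr
      have hx1 : 0 ≤ 1 - x ^ 2 := by nlinarith
      have hQ : (1 - n * x ^ 2) * (2 * kap * x) ^ n ≤ (2 * u) ^ n := by
        have h1 : (2 * kap * x * (1 - x ^ 2)) ^ n ≤ (2 * u) ^ n := by
          apply pow_le_pow_left₀ (by positivity)
          linarith
        have h2 : 1 - n * x ^ 2 ≤ (1 - x ^ 2) ^ n := by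
          have := one_add_mul_le_pow (a := -x ^ 2) (by nlinarith) n
          calc _ = 1 + (n:ℝ) * (-x ^ 2) := by ring
            _ ≤ _ := this
            _ = _ := by ring
        rw [mul_pow _ (1 - x ^ 2), mul_comm] at h1
        refine le_trans ?_ h1
        gcongr
      have hQP : (2 * u) ^ n ≤ (2 * kap * x) ^ n := by
        apply pow_le_pow_left₀ (by positivity)
        linarith
      have hmb : 3 / 4 * (lam n * r) ^ k ≤ m ^ k := by
        have : m = (x ^ del n * m) * r := by
          calc m = m * (x ^ del n * r) := by rw [hrr, mul_one]
            _ = _ := by ring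
        rw [this, mul_pow, mul_pow _ r, ← mul_assoc]
        gcongr
      have hm2 : m ≤ 2 * lam n * r := by
        have : m = (x ^ del n * m) * r := by
          calc m = m * (x ^ del n * r) := by rw [hrr, mul_one]
            _ = _ := by ring
        rw [this]
        gcongr
      have hPb : (2 * kap * x) ^ n * (lam n * r) ^ (k + 1) = lam n * D * R := by
        rw [← hlam, ← hpi, hkn]
        simp only [mul_pow, pow_succ]; ring
      have hE : (2 * kap * x) ^ n * (lam n * r) ^ k * r = D * R := by
        have : lam n * ((2 * kap * x) ^ n * (lam n * r) ^ k * r) = lam n * (D * R) := by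
          rw [← mul_assoc (lam n) D R, ← hPb]; ring
        exact mul_left_cancel₀ hl.ne' this
      have hEx : (2 * kap * x) ^ n * (lam n * r) ^ k * x ^ 2 = D := by
        have : r * ((2 * kap * x) ^ n * (lam n * r) ^ k * x ^ 2) = r * D := by
          calc _ = ((2 * kap * x) ^ n * (lam n * r) ^ k * r) * x ^ 2 := by ring
            _ = D * (R * x ^ 2) := by rw [hE]; ring
            _ = r * D := by rw [hr2]; ring
        exact mul_left_cancel₀ hr.ne' this
      obtain ⟨c1, c2⟩ := nonlin_est (k := k) (by omega) (P := (2 * kap * x) ^ n)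
        (Q := (2 * u) ^ n) (b := lam n * r) (m := m) (ν := n * x ^ 2) (by positivity) hm
        (by positivity) hQP (by positivity) hν hQ hmb
      have hQm : (2 * u * m) ^ n = (2 * u) ^ n * m ^ (k + 1) := by rw [mul_pow, ← hkn]
      rw [hPb, ← hQm] at c1 c2
      set E := (2 * kap * x) ^ n * (lam n * r) ^ k with hEdef
      have hE0 : 0 < E := by positivity
      have hνE : n * x ^ 2 * E * (lam n * r) = n * D * lam n * r := by rw [← hEx]; ring
      rw [hνE] at c1 c2
      have hw : K + σ * r < s * (m - lam n * r) := by linarith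
      have hσr : 0 < σ * r := mul_pos hσ hr
      have hcomb : 2 * E * (s * (m - lam n * r)) - n * D * lam n * r
          ≤ s * ((2 * u * m) ^ n - lam n * D * R) := by
        rcases hs with rfl | rfl
        · have := c1 (by linarith)
          linarith
        · have := c2 (by linarith)
          linarith
      have hbig : 2 * E * (K + σ * r) < 2 * E * (s * (m - lam n * r)) := by gcongr
      have hEσ : E * (σ * r) = σ * (D * R) := by rw [← hE]; ring
      have hEr : r ≤ E := by
        have h1 : r * x ^ 2 ≤ E * x ^ 2 := by rw [hEx]; linarith
        exact le_of_mul_le_mul_right h1 (by positivity)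
      have hEK : G * r ≤ K * E := by gcongr
      -- second derivative
      have hmu'' : deriv (deriv μ) x = (2 * u * m) ^ n - x / 2 * deriv μ x - eps n * m := by
        linarith
      have hsmu : s * (x / 2 * deriv μ x) = - ((s * lam n + σ) * del n * r / 2) := by
        have : s * deriv μ x = - ((s * lam n + σ) * del n * r1) := by linarith
        calc s * (x / 2 * deriv μ x) = x / 2 * (s * deriv μ x) := by ring
          _ = - ((s * lam n + σ) * del n * (r1 * x) / 2) := by rw [this]; ring
          _ = _ := by rw [hr1]
      have hs_le : s ≤ 1 := by rcases hs with rfl | rfl <;> norm_num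
      have hs_ge : -1 ≤ s := by rcases hs with rfl | rfl <;> norm_num
      have hem : s * (eps n * m) ≤ eps n * (2 * lam n * r) := by
        calc s * (eps n * m) ≤ 1 * (eps n * m) := by gcongr
          _ ≤ eps n * (2 * lam n * r) := by rw [one_mul]; gcongr
      have hld : -(lam n * del n * r) ≤ (s * lam n + σ) * del n * r := by
        have : -lam n ≤ s * lam n + σ := by nlinarith
        have h2 : (-lam n) * (del n * r) ≤ (s * lam n + σ) * (del n * r) := by gcongr
        linarith
      have hGr : G * r = n * D * lam n * r + lam n * del n * r / 2 + eps n * (2 * lam n * r) := by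
        rw [hG]; ring
      have hfin : s * deriv (deriv μ) x - (s * lam n + σ) * (D * R)
          = s * ((2 * u * m) ^ n - lam n * D * R) - s * (x / 2 * deriv μ x) - s * (eps n * m)
            - σ * (D * R) := by
        rw [hmu'']; ring
      rw [hfin, hsmu]
      have hKE : 0 < K * E := by positivity
      have hDR : 0 < σ * (D * R) := by positivity
      linarith
  have near : ∀ y, 0 < y → y ≤ y0 → |mu3 n μ y| ≤ K := by
    intro y hy hyy
    have hr : 0 < y ^ (-(del n)) := Real.rpow_pos_of_pos hy _
    have aux : ∀ s : ℝ, (s = 1 ∨ s = -1) → s * mu3 n μ y ≤ K := by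
      intro s hs
      apply le_of_forall_pos_le_add
      intro τ hτ
      have := main s hs (τ / y ^ (-(del n))) (by positivity) y hy hyy
      have e : τ / y ^ (-(del n)) * y ^ (-(del n)) = τ := by field_simp
      unfold mu3
      linarith
    rw [abs_le]
    constructor
    · linarith [aux (-1) (Or.inr rfl)]
    · linarith [aux 1 (Or.inl rfl)]
  obtain ⟨M1, hM1, hfar⟩ : ∃ M : ℝ, 0 < M ∧ ∀ y ≥ y0, |mu3 n μ y| ≤ M := by
    apply bounded_of_tendsto (l := 0)
    · intro x hx
      have hx0 : 0 < x := lt_of_lt_of_le hy0 hx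
      have h1 := (hdf x hx0).continuousAt
      have h2 := (hasDerivAt_rpow' (del n) hx0).continuousAt
      have h3 : ContinuousAt (mu3 n μ) x := h1.sub (h2.const_mul _)
      exact h3.continuousWithinAt
    · have t1 : Filter.Tendsto (fun y : ℝ => y ^ (-(2 * eps n)) * (y ^ (2 * eps n) * μ y))
          Filter.atTop (nhds (0 * 0)) :=
        (tendsto_rpow_neg_atTop (by positivity)).mul hlim
      have t2 : Filter.Tendsto (fun y : ℝ => lam n * y ^ (-(del n))) Filter.atTop
          (nhds (lam n * 0)) :=
        (tendsto_rpow_neg_atTop (by linarith)).const_mul _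
      have t3 := t1.sub t2
      simp only [mul_zero, sub_self] at t3
      refine t3.congr' ?_
      filter_upwards [Filter.eventually_gt_atTop 0] with y hy
      unfold mu3
      rw [← mul_assoc, ← Real.rpow_add hy]
      simp
  refine ⟨max (max K M1) (|mu3 n μ 0|), lt_max_of_lt_left (lt_max_of_lt_left hK0), fun y hy => ?_⟩
  rcases hy.eq_or_lt with h | h
  · rw [← h]; exact le_max_right _ _
  · refine le_max_of_le_left ?_
    rcases le_total y y0 with h' | h'
    · exact le_max_of_le_left (near y h h')
    · exact le_max_of_le_right (hfar y h')

lemma tau_facts {n : ℕ} (hn : 4 ≤ n) {t : ℝ} (ht : 1 ≤ t) :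
    0 < t ^ (-(gam n)) ∧ t ^ (-(gam n)) ≤ 1 ∧ t ^ (-(eps n)) ≤ (t ^ (-(gam n))) ^ 2 ∧
    t ^ (-(eps n)) = t ^ (-(gam n)) * (t ^ (-(gam n))) ^ (del n) ∧
    t ^ (-(3 * gam n)) ≤ t ^ (-(eps n)) ∧
    (t ^ (-(eps n))) ^ (n - 2) ≤ ((t ^ (-(gam n))) ^ 2) ^ (n - 1) := by
  obtain ⟨hd1, hd2, h3, h4, h5, h6, h7, h8, h9, h10⟩ := del_facts hn
  have ht0 : 0 < t := by linarith
  have hτ : 0 < t ^ (-(gam n)) := Real.rpow_pos_of_pos ht0 _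
  refine ⟨hτ, Real.rpow_le_one_of_one_le_of_nonpos ht (by linarith), ?_, ?_, ?_, ?_⟩
  · rw [← Real.rpow_natCast, ← Real.rpow_mul ht0.le]
    apply Real.rpow_le_rpow_of_exponent_le ht
    push_cast; linarith
  · rw [← Real.rpow_mul ht0.le, ← Real.rpow_add ht0]
    congr 1; linarith
  · apply Real.rpow_le_rpow_of_exponent_le ht; linarith
  · rw [← pow_mul, ← Real.rpow_natCast, ← Real.rpow_natCast, ← Real.rpow_mul ht0.le,
      ← Real.rpow_mul ht0.le]
    apply Real.rpow_le_rpow_of_exponent_le ht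
    rw [Nat.cast_mul, Nat.cast_sub (by omega), Nat.cast_sub (by omega)]
    push_cast; linarith

lemma final_real {n : ℕ} (hn : 4 ≤ n) {C t y U P : ℝ} (hC : 1 ≤ C) (ht : 1 ≤ t) (hy : 0 ≤ y)
    (hU0 : 0 ≤ U) (hU1 : U ≤ 1) (hUy : U ≤ y) (hP1 : |P| ≤ C * t ^ (-(gam n)))
    (hP2 : 0 < y → |P| ≤ C * (t ^ (-(eps n)) * (y ^ (-(del n)) + 1))) :
    |2 * U * P + P ^ 2| ≤ 6 * C ^ 2 * (t ^ (-(gam n))) ^ 2 ∧ |2 * U + 2 * P| ≤ 4 * C ∧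
    |2 * U * P + P ^ 2| ^ (n - 2) * |2 * U + 2 * P| ^ 2
      ≤ (6 * C ^ 2) ^ (n - 2) * (4 * C) ^ 2 * ((t ^ (-(gam n))) ^ 2) ^ (n - 1) := by
  obtain ⟨hd1, hd2, -, -, -, -, -, -, h9, -⟩ := del_facts hn
  obtain ⟨hτ, hτ1, hετ, heps, -, hpow⟩ := tau_facts hn ht
  have he0 : 0 < t ^ (-(eps n)) := Real.rpow_pos_of_pos (by linarith) _
  set τ := t ^ (-(gam n)) with hτdef
  set E := t ^ (-(eps n)) with hEdef
  have hA : |2 * U * P + P ^ 2| ≤ |P| * (2 * U + |P|) := by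
    have e : 2 * U * P + P ^ 2 = P * (2 * U + P) := by ring
    rw [e, abs_mul]
    gcongr
    refine (abs_add_le _ _).trans ?_
    rw [abs_of_nonneg (by linarith : 0 ≤ 2 * U)]
  have hW : |2 * U + 2 * P| ≤ 2 * U + 2 * |P| := by
    refine (abs_add_le _ _).trans ?_
    rw [abs_of_nonneg (by linarith : 0 ≤ 2 * U), abs_mul, abs_two]
  have hP0 := abs_nonneg P
  have hPC : |P| ≤ C := hP1.trans (by nlinarith)
  have hW4 : |2 * U + 2 * P| ≤ 4 * C := by linarith
  set A := |2 * U * P + P ^ 2| with hAdef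
  set W := |2 * U + 2 * P| with hWdef
  have hA0 : 0 ≤ A := abs_nonneg _
  have hW0 : 0 ≤ W := abs_nonneg _
  have hn1 : n - 1 = (n - 2) + 1 := by omega
  rcases le_or_gt y τ with hyτ | hyτ
  · have h1 : A ≤ 6 * C ^ 2 * τ ^ 2 := by
      calc A ≤ |P| * (2 * U + |P|) := hA
        _ ≤ (C * τ) * (2 * τ + C * τ) := by gcongr; linarith
        _ ≤ (C * τ) * (2 * (C * τ) + C * τ) := by
          have : τ ≤ C * τ := le_mul_of_one_le_left hτ.le hC
          gcongr
        _ ≤ 6 * C ^ 2 * τ ^ 2 := by nlinarith [sq_nonneg (C * τ)]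
    have h2 : W ≤ 4 * C * τ := by
      have : τ ≤ C * τ := le_mul_of_one_le_left hτ.le hC
      linarith
    refine ⟨h1, hW4, ?_⟩
    calc A ^ (n - 2) * W ^ 2 ≤ (6 * C ^ 2 * τ ^ 2) ^ (n - 2) * (4 * C * τ) ^ 2 := by gcongr
      _ = _ := by rw [hn1, mul_pow, pow_succ (τ ^ 2)]; ring
  · have hy0 : 0 < y := hτ.trans hyτ
    have hP2 := hP2 hy0
    rcases le_or_gt y 1 with hy1 | hy1
    · obtain ⟨z, hz⟩ : ∃ z, z = y / τ := ⟨_, rfl⟩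
      have hyz : y = τ * z := by rw [hz]; field_simp
      have hz1 : 1 ≤ z := by rw [hz, le_div_iff₀ hτ]; linarith
      have hz0 : 0 < z := by linarith
      have hr0 : 0 < z ^ (-(del n)) := Real.rpow_pos_of_pos hz0 _
      have h1y : 1 ≤ y ^ (-(del n)) :=
        Real.one_le_rpow_of_pos_of_le_one_of_nonpos hy0 hy1 (by linarith)
      have hEy : E * y ^ (-(del n)) = τ * z ^ (-(del n)) := by
        rw [hyz, Real.mul_rpow hτ.le hz0.le, heps, Real.rpow_neg hτ.le]
        have : 0 < τ ^ del n := Real.rpow_pos_of_pos hτ _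
        field_simp
      have hPz : |P| ≤ 2 * C * (τ * z ^ (-(del n))) := by
        refine hP2.trans ?_
        rw [← hEy]
        have : E ≤ E * y ^ (-(del n)) := le_mul_of_one_le_right he0.le h1y
        nlinarith
      have hτz : τ ≤ τ * z := le_mul_of_one_le_right hτ.le hz1
      have hCτz : C * τ ≤ C * (τ * z) := by gcongr
      have hτCτ : τ * z ≤ C * (τ * z) := le_mul_of_one_le_left (by positivity) hC
      have hUz : U ≤ C * (τ * z) := by linarith
      have h1 : A ≤ 6 * C ^ 2 * τ ^ 2 * (z * z ^ (-(del n))) := by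
        calc A ≤ |P| * (2 * U + |P|) := hA
          _ ≤ (2 * C * (τ * z ^ (-(del n)))) * (3 * (C * (τ * z))) := by gcongr; linarith
          _ = _ := by ring
      have h2 : W ≤ 4 * C * τ * z := by linarith
      have hzz : z * z ^ (-(del n)) = z ^ (1 - del n) := by
        rw [sub_eq_add_neg, Real.rpow_add hz0, Real.rpow_one]
      have hzz1 : z * z ^ (-(del n)) ≤ 1 := by
        rw [hzz]; exact Real.rpow_le_one_of_one_le_of_nonpos hz1 (by linarith)
      have hzpow : (z * z ^ (-(del n))) ^ (n - 2) * z ^ 2 ≤ 1 := by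
        rw [hzz, ← Real.rpow_natCast, ← Real.rpow_natCast, ← Real.rpow_mul hz0.le,
          ← Real.rpow_add hz0]
        apply Real.rpow_le_one_of_one_le_of_nonpos hz1
        rw [Nat.cast_sub (by omega)]
        push_cast; linarith
      refine ⟨h1.trans (mul_le_of_le_one_right (by positivity) hzz1), hW4, ?_⟩
      calc A ^ (n - 2) * W ^ 2
          ≤ (6 * C ^ 2 * τ ^ 2 * (z * z ^ (-(del n)))) ^ (n - 2) * (4 * C * τ * z) ^ 2 := by gcongr
        _ = ((6 * C ^ 2) ^ (n - 2) * (4 * C) ^ 2 * (τ ^ 2) ^ (n - 1)) *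
            ((z * z ^ (-(del n))) ^ (n - 2) * z ^ 2) := by
            rw [hn1, mul_pow _ (z * z ^ (-(del n))), mul_pow _ (τ ^ 2), pow_succ (τ ^ 2)]; ring
        _ ≤ _ := mul_le_of_le_one_right (by positivity) hzpow
    · have h1y : y ^ (-(del n)) ≤ 1 :=
        Real.rpow_le_one_of_one_le_of_nonpos hy1.le (by linarith)
      have hPE : |P| ≤ 2 * C * E := by
        refine hP2.trans ?_
        have : C * (E * (y ^ (-(del n)) + 1)) ≤ C * (E * (1 + 1)) := by gcongr
        linarith
      have h1 : A ≤ 6 * C ^ 2 * E := by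
        calc A ≤ |P| * (2 * U + |P|) := hA
          _ ≤ (2 * C * E) * (3 * C) := by gcongr; linarith
          _ = _ := by ring
      refine ⟨h1.trans (by gcongr), hW4, ?_⟩
      calc A ^ (n - 2) * W ^ 2 ≤ (6 * C ^ 2 * E) ^ (n - 2) * (4 * C) ^ 2 := by gcongr
        _ = (6 * C ^ 2) ^ (n - 2) * (4 * C) ^ 2 * E ^ (n - 2) := by rw [mul_pow]; ring
        _ ≤ _ := by gcongr

lemma phiFun_bound {n : ℕ} (hn : 4 ≤ n) {η μ h : ℝ → ℝ}
    (hη : IsReactiveProfile n η) (hμ : IsDiffusiveProfile n μ) (hh : IsCorrector n η h) :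
    ∃ C : ℝ, 1 ≤ C ∧ ∀ t ≥ (1 : ℝ), ∀ x : ℝ,
      |phiFun n η μ h x t| ≤ C * t ^ (-(gam n)) ∧
      (0 < |x| / Real.sqrt t → |phiFun n η μ h x t|
        ≤ C * (t ^ (-(eps n)) * ((|x| / Real.sqrt t) ^ (-(del n)) + 1))) := by
  obtain ⟨M1, hM1, hb1, hb1'⟩ := eta_bounds hn hη
  obtain ⟨M2, hM2, hb2⟩ := mu3_bound hn hμ
  obtain ⟨M3, hM3, hb3⟩ := phi2_bound hn hh
  refine ⟨M1 + M2 + M3 + 1, by linarith, fun t ht x => ?_⟩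
  have ht0 : 0 < t := by linarith
  obtain ⟨hτ, hτ1, hετ, heps, h3e, -⟩ := tau_facts hn ht
  have he0 : 0 < t ^ (-(eps n)) := Real.rpow_pos_of_pos ht0 _
  have h30 : 0 < t ^ (-(3 * gam n)) := Real.rpow_pos_of_pos ht0 _
  have hs : 0 < Real.sqrt t := Real.sqrt_pos.mpr ht0
  have hta : t ^ alph n = Real.sqrt t * t ^ (-(gam n)) := by
    rw [Real.sqrt_eq_rpow, ← Real.rpow_add ht0]; rfl
  have hz : |x| / t ^ alph n = (|x| / Real.sqrt t) / t ^ (-(gam n)) := by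
    rw [hta, div_div]
  unfold phiFun
  rw [hz]
  have hy : 0 ≤ |x| / Real.sqrt t := by positivity
  set τ := t ^ (-(gam n)) with hτdef
  set E := t ^ (-(eps n)) with hEdef
  set y := |x| / Real.sqrt t with hydef
  have hEτ : E ≤ τ := hετ.trans (by nlinarith)
  have hz0 : 0 ≤ y / τ := by positivity
  have k2 : |E * mu3 n μ y| ≤ M2 * E := by
    rw [abs_mul, abs_of_pos he0, mul_comm]; gcongr; exact hb2 y hy
  have k3 : |t ^ (-(3 * gam n)) * phi2 n h (y / τ)| ≤ M3 * E := by
    rw [abs_mul, abs_of_pos h30, mul_comm]; gcongr; exact hb3 _ hz0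
  have k1 : |τ * η (y / τ)| ≤ M1 * τ := by
    rw [abs_mul, abs_of_pos hτ, mul_comm]; gcongr; exact hb1 _ hz0
  have htri := abs_add_three (τ * η (y / τ)) (E * mu3 n μ y)
    (t ^ (-(3 * gam n)) * phi2 n h (y / τ))
  constructor
  · have : M2 * E ≤ M2 * τ := by gcongr
    have : M3 * E ≤ M3 * τ := by gcongr
    linarith
  · intro hy0
    have hr : 0 < y ^ (-(del n)) := Real.rpow_pos_of_pos hy0 _
    have k1' : |τ * η (y / τ)| ≤ M1 * (E * y ^ (-(del n))) := by
      rw [abs_mul, abs_of_pos hτ]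
      have e : τ * (y / τ) ^ (-(del n)) = E * y ^ (-(del n)) := by
        have : 0 < τ ^ del n := Real.rpow_pos_of_pos hτ _
        rw [Real.div_rpow hy hτ.le, heps, Real.rpow_neg hτ.le]
        field_simp
      rw [← e]
      have := mul_le_mul_of_nonneg_left (hb1' (y / τ) (by positivity)) hτ.le
      linarith
    have p1 : 0 < E * y ^ (-(del n)) := by positivity
    have p2 := mul_pos hM1 he0
    have p3 := mul_pos hM2 p1
    have p4 := mul_pos hM3 p1
    linarith

/-- Bound on the coefficients V_{p,q} of the nonlinearity:
sup_x |V_{p,q}(x,t)| ≤ c t^{−e(p,q)} for all t ≥ 1. -/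
theorem nonlinearity_coefficients_bound (n : ℕ) (hn : 4 ≤ n) (η μ h : ℝ → ℝ)
    (hη : IsReactiveProfile n η) (hμ : IsDiffusiveProfile n μ) (hh : IsCorrector n η h)
    (p q : ℕ) (hp1 : 1 ≤ p) (hpn : p ≤ n) (hqp : q ≤ p) (hpq : 2 ≤ p + q) :
    ∃ c : ℝ, 0 < c ∧ ∀ t ≥ (1 : ℝ), ∀ x : ℝ,
      |Vpq n p q η μ h x t| ≤ c * t ^ (-(epq n p q)) := by
  obtain ⟨C, hC, hφ⟩ := phiFun_bound hn hη hμ hh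
  have hb : ∀ t ≥ (1 : ℝ), ∀ x : ℝ, _ := fun t ht x =>
    final_real hn (U := ubar x t) (P := phiFun n η μ h x t) hC ht
      (show 0 ≤ |x| / Real.sqrt t by positivity)
      (mu1_bounds (by positivity)).1 (mu1_bounds (by positivity)).2.1
      ((mu1_bounds (by positivity)).2.2.1.trans
        (mul_le_of_le_one_left (by positivity) kap_lt_one))
      (hφ t ht x).1 (hφ t ht x).2
  have hch : 0 < (n.choose p : ℝ) * (p.choose q : ℝ) := by
    have h1 := Nat.choose_pos hpn
    have h2 := Nat.choose_pos hqp
    positivity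
  by_cases hc : p = 2 ∧ q = 0
  · obtain ⟨rfl, rfl⟩ := hc
    refine ⟨(n.choose 2 : ℝ) * (Nat.choose 2 0 : ℝ) * ((6 * C ^ 2) ^ (n - 2) * (4 * C) ^ 2),
      by positivity, fun t ht x => ?_⟩
    obtain ⟨-, -, h3⟩ := hb t ht x
    have ht0 : 0 < t := by linarith
    have he : t ^ (-(epq n 2 0)) = ((t ^ (-(gam n))) ^ 2) ^ (n - 1) := by
      rw [← pow_mul, ← Real.rpow_natCast, ← Real.rpow_mul ht0.le]
      congr 1
      rw [Nat.cast_mul, Nat.cast_sub (by omega)]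
      simp only [epq]
      push_cast; norm_num; ring
    rw [he]
    unfold Vpq
    rw [abs_mul, abs_mul, abs_of_pos hch, abs_pow, abs_pow, mul_assoc (_ * _) (_ ^ _) (_ ^ _),
      mul_assoc (_ * _) (_ * _) (_ ^ _)]
    exact mul_le_mul_of_nonneg_left h3 hch.le
  · refine ⟨(n.choose p : ℝ) * (p.choose q : ℝ) * ((6 * C ^ 2) ^ (n - p) * (4 * C) ^ (p - q)),
      by positivity, fun t ht x => ?_⟩
    obtain ⟨h1, h2, -⟩ := hb t ht x
    have ht0 : 0 < t := by linarith
    have he : t ^ (-(epq n p q)) = ((t ^ (-(gam n))) ^ 2) ^ (n - p) := by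
      rw [← pow_mul, ← Real.rpow_natCast, ← Real.rpow_mul ht0.le]
      congr 1
      rw [Nat.cast_mul, Nat.cast_sub (by omega)]
      simp only [epq, if_neg hc]
      push_cast; ring
    rw [he]
    unfold Vpq
    rw [abs_mul, abs_mul, abs_of_pos hch, abs_pow, abs_pow, mul_assoc (_ * _) (_ ^ _) (_ ^ _),
      mul_assoc (_ * _) (_ * _) (_ ^ _)]
    refine mul_le_mul_of_nonneg_left ?_ hch.le
    calc _ ≤ (6 * C ^ 2 * (t ^ (-(gam n))) ^ 2) ^ (n - p) * (4 * C) ^ (p - q) := by gcongr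
      _ = _ := by rw [mul_pow]; ring
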